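/- arXiv:2112.05894 — 2 statements merged into one kernel-verified Lean document; each statement's English description precedes it below -/
import Mathlib

section
/- Let P be a finite set with a partial order <' and let ≺_1, …, ≺_k be linearizations of <' (linear orders on P with p <' q implying p ≺_i q). For a linearization ≺ of <', let Δ_{≺,<'} = conv{1_{max_{<'} J} : J is an order ideal of (P,≺)} ⊆ ℝ^P and let O(P,≺) = {x ∈ ℝ^P : 0 ≤ x_p ≤ 1 for all p, and x_p ≤ x_q whenever q ≺ p}. If the union ⋃_{i=1}^k Δ_{≺_i,<'} is a convex set, then the union ⋃_{i=1}^k O(P,≺_i) is also a convex set. -/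
open Pointwise

/-- `J` is an order ideal (lower set) with respect to the strict order relation `r`. -/
def IsLowerIdeal {P : Type*} (r : P → P → Prop) (J : Set P) : Prop :=
  ∀ ⦃p q : P⦄, r p q → q ∈ J → p ∈ J

/-- The set of `r`-maximal elements of `J`. -/
def maxElems {P : Type*} (r : P → P → Prop) (J : Set P) : Set P :=
  {p ∈ J | ∀ q ∈ J, ¬ r p q}

/-- The 0/1 indicator vector of `A ⊆ P`, as a point of `ℝ^P`. -/
noncomputable def ind {P : Type*} (A : Set P) : P → ℝ :=
  A.indicator 1

/-- The order ideal of `(P, r)` generated by `A`. -/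
def genIdeal {P : Type*} (r : P → P → Prop) (A : Set P) : Set P :=
  {p | ∃ q ∈ A, p = q ∨ r p q}

/-- The Hibi–Li operation `J1 *' J2` relative to the order `r`: the order ideal of `(P, r)`
generated by `(J1 ∩ J2) ∩ (max_r J1 ∪ max_r J2)`. -/
def starOp {P : Type*} (r : P → P → Prop) (J1 J2 : Set P) : Set P :=
  genIdeal r ((J1 ∩ J2) ∩ (maxElems r J1 ∪ maxElems r J2))

/-- The relative poset polytope `R(P, lt, lt')`: the convex hull of the points
`1_{max_{lt'} J}` over all order ideals `J` of `(P, lt)`. -/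
noncomputable def RPP {P : Type*} (lt lt' : P → P → Prop) : Set (P → ℝ) :=
  convexHull ℝ {x | ∃ J : Set P, IsLowerIdeal lt J ∧ x = ind (maxElems lt' J)}

/-- The dilation `m·Q = {m·x : x ∈ Q}`. -/
def dilate {P : Type*} (m : ℕ) (Q : Set (P → ℝ)) : Set (P → ℝ) :=
  (fun x => (m : ℝ) • x) '' Q

/-- The order polytope of `(P, lt)`. -/
def orderPolytope {P : Type*} (lt : P → P → Prop) : Set (P → ℝ) :=
  {x | (∀ p, 0 ≤ x p ∧ x p ≤ 1) ∧ ∀ p q, lt q p → x p ≤ x q}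

/-- The chain polytope of `(P, lt)`. -/
def chainPolytope {P : Type*} (lt : P → P → Prop) : Set (P → ℝ) :=
  {x | (∀ p, 0 ≤ x p) ∧ ∀ (k : ℕ) (c : Fin k → P),
    (∀ i j : Fin k, i < j → lt (c i) (c j)) → (∑ i, x (c i)) ≤ 1}


open Classical in
/-- The linear transfer map attached to a choice `s` of successors. -/
noncomputable def trMap {P : Type*} (lt' : P → P → Prop) (s : P → P) :
    (P → ℝ) →ₗ[ℝ] (P → ℝ) where
  toFun x := fun p => x p - if ∃ q, lt' p q then x (s p) else 0
  map_add' x y := by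
    ext p
    by_cases h : ∃ q, lt' p q <;> simp [h] <;> ring
  map_smul' c x := by
    ext p
    by_cases h : ∃ q, lt' p q <;> simp [h] <;> ring

def IsSucc {P : Type*} (lt' r : P → P → Prop) (s : P → P) : Prop :=
  ∀ p, (∃ q, lt' p q) → lt' p (s p) ∧ ∀ q, lt' p q → q = s p ∨ r (s p) q

theorem wf_of {P : Type*} [Fintype P] (r : P → P → Prop) (hirr : ∀ p, ¬ r p p)
    (htr : ∀ a b c, r a b → r b c → r a c) : WellFounded r := by
  haveI : Std.Irrefl r := ⟨hirr⟩
  haveI : IsTrans P r := ⟨htr⟩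
  exact Finite.wellFounded_of_trans_of_irrefl r

theorem wf_flip {P : Type*} [Fintype P] (r : P → P → Prop) (hirr : ∀ p, ¬ r p p)
    (htr : ∀ a b c, r a b → r b c → r a c) : WellFounded (fun a b => r b a) :=
  wf_of _ hirr (fun a b c h1 h2 => htr c b a h2 h1)

theorem exists_succ {P : Type*} [Fintype P] (lt' r : P → P → Prop)
    (hirr : ∀ p, ¬ r p p) (htr : ∀ a b c, r a b → r b c → r a c)
    (htot : ∀ p q : P, p = q ∨ r p q ∨ r q p) : ∃ s, IsSucc lt' r s := by
  have : ∀ p, ∃ m, (∃ q, lt' p q) → lt' p m ∧ ∀ q, lt' p q → q = m ∨ r m q := by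
    intro p
    by_cases h : ∃ q, lt' p q
    · obtain ⟨m, hm, hmin⟩ := (wf_of r hirr htr).has_min {q | lt' p q} h
      refine ⟨m, fun _ => ⟨hm, fun q hq => ?_⟩⟩
      have := hmin q hq
      rcases htot q m with h | h | h
      · exact Or.inl h
      · exact absurd h this
      · exact Or.inr h
    · exact ⟨p, fun h' => absurd h' h⟩
  choose s hs using this
  exact ⟨s, hs⟩

theorem tr_vanish {P : Type*} [Fintype P] (lt' r : P → P → Prop)
    (hlt'irr : ∀ p, ¬ lt' p p) (hlt'tr : ∀ a b c, lt' a b → lt' b c → lt' a c)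
    (s : P → P) (hs : IsSucc lt' r s) (x : P → ℝ) (a : P)
    (h : ∀ b, b = a ∨ lt' a b → trMap lt' s x b = 0) : x a = 0 := by
  induction a using (wf_flip lt' hlt'irr hlt'tr).induction with
  | _ a ih =>
    have h0 := h a (Or.inl rfl)
    by_cases hq : ∃ q, lt' a q
    · have h1 := ih (s a) (hs a hq).1 (by
        rintro b (rfl | hb)
        · exact h _ (Or.inr (hs a hq).1)
        · exact h _ (Or.inr (hlt'tr _ _ _ (hs a hq).1 hb)))
      simp only [trMap, LinearMap.coe_mk, AddHom.coe_mk, hq, if_true] at h0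
      linarith
    · simpa [trMap, hq] using h0

theorem tr_inj {P : Type*} [Fintype P] (lt' r : P → P → Prop)
    (hlt'irr : ∀ p, ¬ lt' p p) (hlt'tr : ∀ a b c, lt' a b → lt' b c → lt' a c)
    (s : P → P) (hs : IsSucc lt' r s) : Function.Injective (trMap lt' s) := by
  rw [injective_iff_map_eq_zero]
  intro x hx
  ext a
  exact tr_vanish lt' r hlt'irr hlt'tr s hs x a (fun b _ => by rw [hx]; rfl)

theorem tr_ind {P : Type*} (lt' r : P → P → Prop)
    (hstrong : ∀ p q, lt' p q → r p q)
    (s : P → P) (hs : IsSucc lt' r s) (J : Set P) (hJ : IsLowerIdeal r J) :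
    trMap lt' s (ind J) = ind (maxElems lt' J) := by
  classical
  ext p
  have hmax : p ∈ maxElems lt' J ↔ p ∈ J ∧ ∀ q ∈ J, ¬ lt' p q := Iff.rfl
  simp only [trMap, LinearMap.coe_mk, AddHom.coe_mk, ind, Set.indicator_apply, Pi.one_apply]
  by_cases hq : ∃ q, lt' p q
  · obtain ⟨h1, h2⟩ := hs p hq
    by_cases h3 : s p ∈ J
    · have h4 : p ∈ J := hJ (hstrong _ _ h1) h3
      have h5 : p ∉ maxElems lt' J := fun h => h.2 _ h3 h1
      simp [hq, h3, h4, h5]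
    · have h5 : p ∈ maxElems lt' J ↔ p ∈ J := by
        rw [hmax]
        refine ⟨fun h => h.1, fun h => ⟨h, fun q hqJ hpq => h3 ?_⟩⟩
        rcases h2 q hpq with rfl | h6
        · exact hqJ
        · exact hJ h6 hqJ
      simp [hq, h3, h5]
  · have h5 : p ∈ maxElems lt' J ↔ p ∈ J := by
      rw [hmax]
      exact ⟨fun h => h.1, fun h => ⟨h, fun q _ hpq => hq ⟨q, hpq⟩⟩⟩
    simp [hq, h5]

theorem convex_orderPolytope {P : Type*} (r : P → P → Prop) : Convex ℝ (orderPolytope r) := by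
  intro x hx y hy a b ha hb hab
  refine ⟨fun p => ⟨?_, ?_⟩, fun p q hpq => ?_⟩
  · have h1 := mul_nonneg ha (hx.1 p).1
    have h2 := mul_nonneg hb (hy.1 p).1
    simp only [Pi.add_apply, Pi.smul_apply, smul_eq_mul]; linarith
  · have h1 := mul_le_mul_of_nonneg_left (hx.1 p).2 ha
    have h2 := mul_le_mul_of_nonneg_left (hy.1 p).2 hb
    simp only [Pi.add_apply, Pi.smul_apply, smul_eq_mul]; linarith
  · have h1 := mul_le_mul_of_nonneg_left (hx.2 p q hpq) ha
    have h2 := mul_le_mul_of_nonneg_left (hy.2 p q hpq) hb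
    simp only [Pi.add_apply, Pi.smul_apply, smul_eq_mul]; linarith

theorem ind_mem_orderPolytope {P : Type*} (r : P → P → Prop) (J : Set P)
    (hJ : IsLowerIdeal r J) : ind J ∈ orderPolytope r := by
  classical
  refine ⟨fun p => ?_, fun p q hpq => ?_⟩
  · simp only [ind, Set.indicator_apply, Pi.one_apply]
    split_ifs <;> norm_num
  · simp only [ind, Set.indicator_apply, Pi.one_apply]
    by_cases hp : p ∈ J
    · simp [hp, hJ hpq hp]
    · simp only [hp, if_false]
      split_ifs <;> norm_num

theorem RPP_sub {P : Type*} (lt' r : P → P → Prop)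
    (hstrong : ∀ p q, lt' p q → r p q) (s : P → P) (hs : IsSucc lt' r s) :
    RPP r lt' ⊆ trMap lt' s '' orderPolytope r := by
  refine convexHull_min ?_ ((convex_orderPolytope r).linear_image _)
  rintro _ ⟨J, hJ, rfl⟩
  exact ⟨ind J, ind_mem_orderPolytope r J hJ, tr_ind lt' r hstrong s hs J hJ⟩

theorem tr_cross {P : Type*} [Fintype P] (lt' r r' : P → P → Prop)
    (hlt'irr : ∀ p, ¬ lt' p p) (hlt'tr : ∀ a b c, lt' a b → lt' b c → lt' a c)
    (s s' : P → P) (hs : IsSucc lt' r s) (hs' : IsSucc lt' r' s') (x x' : P → ℝ)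
    (hx : x ∈ orderPolytope r) (hx' : x' ∈ orderPolytope r')
    (h : trMap lt' s x = trMap lt' s' x') : x = x' := by
  ext a
  induction a using (wf_flip lt' hlt'irr hlt'tr).induction with
  | _ a ih =>
    have h0 := congrFun h a
    by_cases hq : ∃ q, lt' a q
    · simp only [trMap, LinearMap.coe_mk, AddHom.coe_mk, hq, if_true] at h0
      obtain ⟨h1, h2⟩ := hs a hq
      obtain ⟨h3, h4⟩ := hs' a hq
      have e1 := ih _ h1
      have e2 := ih _ h3
      have l1 : x (s' a) ≤ x (s a) := by
        rcases h2 _ h3 with e | e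
        · rw [e]
        · exact hx.2 _ _ e
      have l2 : x' (s a) ≤ x' (s' a) := by
        rcases h4 _ h1 with e | e
        · rw [e]
        · exact hx'.2 _ _ e
      linarith
    · simpa [trMap, hq] using h0

theorem isClosed_RPP {P : Type*} [Fintype P] (lt' r : P → P → Prop) : IsClosed (RPP r lt') := by
  have : {x : P → ℝ | ∃ J : Set P, IsLowerIdeal r J ∧ x = ind (maxElems lt' J)}.Finite := by
    refine (Set.finite_range (fun J : Set P => ind (maxElems lt' J))).subset ?_
    rintro _ ⟨J, _, rfl⟩
    exact ⟨J, rfl⟩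
  exact this.isClosed_convexHull ℝ

/-- pigeonhole along a segment -/
theorem pigeon {E : Type*} [NormedAddCommGroup E] [NormedSpace ℝ E] (k : ℕ) (D : Fin k → Set E)
    (hcl : ∀ i, IsClosed (D i)) (hconv : Convex ℝ (⋃ i, D i)) (y w : E)
    (hy : y ∈ ⋃ i, D i) (hw : w ∈ ⋃ i, D i) :
    ∃ i, y ∈ D i ∧ ∃ e : ℝ, 0 < e ∧ e ≤ 1 ∧ (1 - e) • y + e • w ∈ D i := by
  let e : ℕ → ℝ := fun n => 1 / ((n : ℝ) + 1)
  have he0 : ∀ n, 0 < e n := fun n => Nat.one_div_pos_of_nat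
  have he1 : ∀ n, e n ≤ 1 := fun n => by
    have : (0 : ℝ) < n + 1 := by positivity
    simp only [e]
    rw [div_le_one this]
    have : (0 : ℝ) ≤ n := by positivity
    linarith
  have hmem : ∀ n, ∃ i, (1 - e n) • y + e n • w ∈ D i := fun n => by
    have := hconv hy hw (a := 1 - e n) (b := e n) (by linarith [he1 n]) (he0 n).le (by ring)
    simpa using this
  choose f hf using hmem
  obtain ⟨i, hi⟩ := Finite.exists_infinite_fiber f
  have hinf : (f ⁻¹' {i}).Infinite := Set.infinite_coe_iff.mp hi
  refine ⟨i, ?_, ?_⟩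
  · have hfreq : ∃ᶠ n in Filter.atTop, (1 - e n) • y + e n • w ∈ D i := by
      have := Nat.frequently_atTop_iff_infinite.mpr hinf
      refine this.mono fun n hn => ?_
      have := hf n
      rwa [show f n = i from hn] at this
    have hlim : Filter.Tendsto (fun n => (1 - e n) • y + e n • w) Filter.atTop (nhds y) := by
      have h1 : Filter.Tendsto e Filter.atTop (nhds 0) := tendsto_one_div_add_atTop_nhds_zero_nat
      have h2 := ((h1.const_sub 1).smul_const y).add (h1.smul_const w)
      simpa using h2
    exact (hcl i).mem_of_frequently_of_tendsto hfreq hlim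
  · obtain ⟨n, hn⟩ := hinf.nonempty
    have := hf n
    rw [show f n = i from hn] at this
    exact ⟨e n, he0 n, he1 n, this⟩

/-- generic point on the wall -/
theorem wall_point {P : Type*} [Fintype P] (lt' r : P → P → Prop)
    (hirr : ∀ p, ¬ r p p) (htr : ∀ a b c, r a b → r b c → r a c)
    (htot : ∀ p q : P, p = q ∨ r p q ∨ r q p)
    (hstrong : ∀ p q, lt' p q → r p q) (s : P → P) (hs : IsSucc lt' r s)
    (p q : P) (hpq : r p q) (hadj : ∀ c, r p c → ¬ r c q) :
    ∃ x ∈ orderPolytope r, trMap lt' s x ∈ RPP r lt' ∧ x p = x q ∧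
      ∀ a b, r a b → (a, b) ≠ (p, q) → x b < x a := by
  classical
  let f : P → P := fun c => if c = p then q else c
  have hpneq : p ≠ q := fun h => hirr q (h ▸ hpq)
  have hfp : ∀ c, f c ≠ p := by
    intro c
    by_cases hc : c = p
    · simp [f, hc, hpneq.symm]
    · simp [f, hc]
  let J : P → Set P := fun c => {a | a = f c ∨ r a (f c)}
  have hJ : ∀ c, IsLowerIdeal r (J c) := by
    rintro c a b hab (rfl | hb)
    · exact Or.inr hab
    · exact Or.inr (htr _ _ _ hab hb)
  have hn : (0 : ℝ) < Fintype.card P := by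
    haveI : Nonempty P := ⟨p⟩
    exact_mod_cast Fintype.card_pos
  let wt : ℝ := (Fintype.card P : ℝ)⁻¹
  have hwt : 0 < wt := inv_pos.mpr hn
  have hsum : ∑ _c : P, wt = 1 := by
    simp only [Finset.sum_const, Finset.card_univ, nsmul_eq_mul, wt]
    exact mul_inv_cancel₀ hn.ne'
  refine ⟨∑ c, wt • ind (J c), ?_, ?_, ?_, ?_⟩
  · exact (convex_orderPolytope r).sum_mem (fun _ _ => hwt.le) hsum
      (fun c _ => ind_mem_orderPolytope r _ (hJ c))
  · rw [map_sum]
    simp only [map_smul]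
    have hc : Convex ℝ (RPP r lt') := convex_convexHull ℝ _
    refine hc.sum_mem (fun _ _ => hwt.le) hsum ?_
    intro c _
    apply subset_convexHull
    exact ⟨J c, hJ c, tr_ind lt' r hstrong s hs _ (hJ c)⟩
  · simp only [Finset.sum_apply, Pi.smul_apply, smul_eq_mul]
    refine Finset.sum_congr rfl fun c _ => ?_
    have : p ∈ J c ↔ q ∈ J c := by
      constructor
      · rintro (h | h)
        · exact absurd h.symm (hfp c)
        · rcases htot q (f c) with h' | h' | h'
          · exact Or.inl h'
          · exact Or.inr h'
          · exact absurd h' (hadj _ h)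
      · exact fun h => hJ c hpq h
    simp [ind, Set.indicator_apply, this]
  · intro a b hab hne
    simp only [Finset.sum_apply, Pi.smul_apply, smul_eq_mul]
    apply Finset.sum_lt_sum
    · intro c _
      exact mul_le_mul_of_nonneg_left ((ind_mem_orderPolytope r _ (hJ c)).2 _ _ hab) hwt.le
    · refine ⟨a, Finset.mem_univ _, ?_⟩
      have ha : a ∈ J a := by
        by_cases h : a = p
        · right; simp only [f, h, if_true]; exact hpq
        · left; simp [f, h]
      have hb : b ∉ J a := by
        by_cases h : a = p
        · subst h
          have hbq : b ≠ q := fun e => hne (by rw [e])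
          have hqb : r q b := by
            rcases htot b q with h' | h' | h'
            · exact absurd h' hbq
            · exact absurd h' (hadj _ hab)
            · exact h'
          rintro (h' | h')
          · exact hbq (by simpa [f] using h')
          · have h'' : r b q := by simpa [f] using h'
            exact hirr _ (htr _ _ _ hqb h'')
        · rintro (h' | h')
          · have h'' : b = a := by simpa [f, h] using h'
            exact hirr a (h'' ▸ hab)
          · have h'' : r b a := by simpa [f, h] using h'
            exact hirr _ (htr _ _ _ hab h'')
      simp [ind, Set.indicator_apply, ha, hb, hwt]

theorem key {P : Type*} [Fintype P] (lt' : P → P → Prop)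
    (hlt'irr : ∀ p, ¬ lt' p p) (hlt'tr : ∀ a b c, lt' a b → lt' b c → lt' a c)
    (k : ℕ) (r : Fin k → (P → P → Prop))
    (hirr : ∀ i p, ¬ r i p p) (htr : ∀ i a b c, r i a b → r i b c → r i a c)
    (htot : ∀ i (p q : P), p = q ∨ r i p q ∨ r i q p)
    (hstrong : ∀ i p q, lt' p q → r i p q)
    (hconv : Convex ℝ (⋃ i, RPP (r i) lt'))
    (i j : Fin k) (p q : P) (hpq : r i p q) (hadj : ∀ c, r i p c → ¬ r i c q)
    (hj : r j q p) :
    ∃ j', r j' q p ∧ ∀ a b, (a, b) ≠ (p, q) → r i a b → r j' a b := by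
  classical
  obtain ⟨s, hs⟩ := exists_succ lt' (r i) (hirr i) (htr i) (htot i)
  obtain ⟨x, hx, hxR, hxpq, hxs⟩ :=
    wall_point lt' (r i) (hirr i) (htr i) (htot i) (hstrong i) s hs p q hpq hadj
  let J : Set P := {a | a = q ∨ r j a q}
  have hJ : IsLowerIdeal (r j) J := by
    rintro a b hab (rfl | hb)
    · exact Or.inr hab
    · exact Or.inr (htr _ _ _ _ hab hb)
  have hup : ∀ b, r j q b → ind (maxElems lt' J) b = 0 := by
    intro b hb
    have : b ∉ maxElems lt' J := by
      rintro ⟨h | h, _⟩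
      · exact hirr j q (h ▸ hb)
      · exact hirr j q (htr j _ _ _ hb h)
    simp [ind, this]
  have hwq : ind (maxElems lt' J) q = 1 := by
    have : q ∈ maxElems lt' J := by
      refine ⟨Or.inl rfl, ?_⟩
      rintro b (rfl | hb) h
      · exact hlt'irr _ h
      · exact hirr j q (htr j _ _ _ (hstrong j _ _ h) hb)
    simp [ind, this]
  have hinj := tr_inj lt' (r i) hlt'irr hlt'tr s hs
  obtain ⟨u, hu⟩ := (LinearMap.injective_iff_surjective.mp hinj) (ind (maxElems lt' J))
  have hup0 : u p = 0 := by
    refine tr_vanish lt' (r i) hlt'irr hlt'tr s hs u p ?_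
    rw [hu]
    rintro b (rfl | hb)
    · exact hup _ hj
    · exact hup _ (htr j _ _ _ hj (hstrong j _ _ hb))
  have huq : u q = 1 := by
    have h0 := congrFun hu q
    rw [hwq] at h0
    by_cases hq : ∃ b, lt' q b
    · have h1 := (hs q hq).1
      have : u (s q) = 0 := by
        refine tr_vanish lt' (r i) hlt'irr hlt'tr s hs u (s q) ?_
        rw [hu]
        rintro b (rfl | hb)
        · exact hup _ (hstrong j _ _ h1)
        · exact hup _ (htr j _ _ _ (hstrong j _ _ h1) (hstrong j _ _ hb))
      simp only [trMap, LinearMap.coe_mk, AddHom.coe_mk, hq, if_true] at h0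
      linarith
    · simpa [trMap, hq] using h0
  obtain ⟨j', hyj, e, he0, he1, hz⟩ := pigeon k (fun i => RPP (r i) lt')
    (fun i => isClosed_RPP lt' (r i)) hconv (trMap lt' s x) (ind (maxElems lt' J))
    (Set.mem_iUnion.mpr ⟨i, hxR⟩)
    (Set.mem_iUnion.mpr ⟨j, subset_convexHull ℝ _ ⟨J, hJ, rfl⟩⟩)
  obtain ⟨s', hs'⟩ := exists_succ lt' (r j') (hirr j') (htr j') (htot j')
  obtain ⟨x', hx', hxx'⟩ := RPP_sub lt' (r j') (hstrong j') s' hs' hyj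
  have hEq := tr_cross lt' (r i) (r j') hlt'irr hlt'tr s s' hs hs' x x' hx hx' hxx'.symm
  subst hEq
  have hmono : ∀ a b, (a, b) ≠ (p, q) → r i a b → r j' a b := by
    intro a b hne hab
    have hlt := hxs a b hab hne
    rcases htot j' a b with h | h | h
    · exact absurd hab (by rw [h]; exact hirr i b)
    · exact h
    · exact absurd (hx'.2 _ _ h) (not_le.mpr hlt)
  refine ⟨j', ?_, hmono⟩
  rcases htot j' p q with h | h | h
  · exact absurd hpq (by rw [h]; exact hirr i q)
  · exfalso
    have hall : ∀ a b, r i a b → r j' a b := by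
      intro a b hab
      by_cases hne : (a, b) = (p, q)
      · obtain ⟨rfl, rfl⟩ := Prod.mk.inj hne
        exact h
      · exact hmono a b hne hab
    have hrel : r j' = r i := by
      ext a b
      refine ⟨fun hab => ?_, hall a b⟩
      rcases htot i a b with h' | h' | h'
      · exact absurd hab (by rw [h']; exact hirr j' b)
      · exact h'
      · exact absurd (htr j' _ _ _ hab (hall _ _ h')) (hirr j' a)
    simp only [hrel] at hz
    obtain ⟨v, hv, hvz⟩ := RPP_sub lt' (r i) (hstrong i) s hs hz
    rw [← hu, ← map_smul, ← map_smul, ← map_add] at hvz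
    have hv' := hinj hvz
    have hle := hv.2 _ _ hpq
    rw [hv'] at hle
    simp only [Pi.add_apply, Pi.smul_apply, smul_eq_mul, hup0, huq, hxpq] at hle
    linarith
  · exact h

theorem exists_adj {P : Type*} [Fintype P] (r : P → P → Prop)
    (hirr : ∀ p, ¬ r p p) (htr : ∀ a b c, r a b → r b c → r a c)
    (z : P → ℝ) (n : ℕ) : ∀ a b, {c | r a c ∧ r c b}.ncard ≤ n → r a b → z a < z b →
    ∃ p q, r p q ∧ z p < z q ∧ ∀ c, r p c → ¬ r c q := by
  induction n with
  | zero =>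
    intro a b hc hab hz
    refine ⟨a, b, hab, hz, fun c h1 h2 => ?_⟩
    have : {c | r a c ∧ r c b} = ∅ :=
      (Set.ncard_eq_zero (Set.toFinite _)).mp (Nat.le_zero.mp hc)
    exact (this ▸ (show c ∈ {c | r a c ∧ r c b} from ⟨h1, h2⟩) : c ∈ (∅ : Set P))
  | succ n ih =>
    intro a b hc hab hz
    by_cases hadj : ∀ c, r a c → ¬ r c b
    · exact ⟨a, b, hab, hz, hadj⟩
    · push Not at hadj
      obtain ⟨c, h1, h2⟩ := hadj
      rcases lt_or_ge (z a) (z c) with h | h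
      · refine ih a c ?_ h1 h
        have : {d | r a d ∧ r d c}.ncard < {d | r a d ∧ r d b}.ncard := by
          apply Set.ncard_lt_ncard _ (Set.toFinite _)
          refine ⟨fun d hd => ⟨hd.1, htr _ _ _ hd.2 h2⟩, fun hss => ?_⟩
          exact hirr c (hss (show c ∈ {d | r a d ∧ r d b} from ⟨h1, h2⟩)).2
        omega
      · refine ih c b ?_ h2 (by linarith)
        have : {d | r c d ∧ r d b}.ncard < {d | r a d ∧ r d b}.ncard := by
          apply Set.ncard_lt_ncard _ (Set.toFinite _)
          refine ⟨fun d hd => ⟨htr _ _ _ h1 hd.1, hd.2⟩, fun hss => ?_⟩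
          exact hirr c (hss (show c ∈ {d | r a d ∧ r d b} from ⟨h1, h2⟩)).1
        omega

/-- If `r_1, …, r_k` are linearizations of the partial order `lt'` on a finite set `P` and
the union of the simplices `Δ_{r_i, lt'} = conv{1_{max_{lt'} J} : J an order ideal of
(P, r_i)}` is convex, then the union of the order polytopes `O(P, r_i)` is also convex. -/
theorem stmt10 {P : Type*} [Fintype P] (lt' : P → P → Prop)
    (hlt'irr : ∀ p, ¬ lt' p p) (hlt'tr : ∀ a b c, lt' a b → lt' b c → lt' a c)
    (k : ℕ) (r : Fin k → (P → P → Prop))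
    (hirr : ∀ i p, ¬ r i p p) (htr : ∀ i a b c, r i a b → r i b c → r i a c)
    (htot : ∀ i (p q : P), p = q ∨ r i p q ∨ r i q p)
    (hstrong : ∀ i p q, lt' p q → r i p q)
    (hconv : Convex ℝ (⋃ i, RPP (r i) lt')) :
    Convex ℝ (⋃ i, orderPolytope (r i)) := by
  intro x hx y hy α β hα hβ hαβ
  obtain ⟨i1, h1⟩ := Set.mem_iUnion.mp hx
  obtain ⟨i2, h2⟩ := Set.mem_iUnion.mp hy
  set z := α • x + β • y with hzdef
  have hz01 : ∀ p, 0 ≤ z p ∧ z p ≤ 1 := by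
    intro p
    have a1 := mul_nonneg hα (h1.1 p).1
    have a2 := mul_nonneg hβ (h2.1 p).1
    have a3 := mul_le_mul_of_nonneg_left (h1.1 p).2 hα
    have a4 := mul_le_mul_of_nonneg_left (h2.1 p).2 hβ
    simp only [hzdef, Pi.add_apply, Pi.smul_apply, smul_eq_mul]
    constructor <;> linarith
  let inv : Fin k → Set (P × P) := fun i => {t | r i t.1 t.2 ∧ z t.1 < z t.2}
  obtain ⟨i, -, hi⟩ := Finset.exists_min_image (Finset.univ : Finset (Fin k))
    (fun i => (inv i).ncard) ⟨i1, Finset.mem_univ _⟩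
  refine Set.mem_iUnion.mpr ⟨i, hz01, fun b a hab => ?_⟩
  by_contra hlt
  push Not at hlt
  obtain ⟨p, q, hpq, hzpq, hadj⟩ :=
    exists_adj (r i) (hirr i) (htr i) z _ a b le_rfl hab hlt
  have hj : ∃ j, r j q p := by
    by_contra hno
    push Not at hno
    have hpq' : ∀ j, r j p q := by
      intro j
      rcases htot j p q with h | h | h
      · exact absurd hpq (by rw [h]; exact hirr i q)
      · exact h
      · exact absurd h (hno j)
    have a1 := mul_le_mul_of_nonneg_left (h1.2 _ _ (hpq' i1)) hα
    have a2 := mul_le_mul_of_nonneg_left (h2.2 _ _ (hpq' i2)) hβ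
    simp only [hzdef, Pi.add_apply, Pi.smul_apply, smul_eq_mul] at hzpq
    linarith
  obtain ⟨j, hj⟩ := hj
  obtain ⟨j', hj', hmono⟩ := key lt' hlt'irr hlt'tr k r hirr htr htot hstrong hconv
    i j p q hpq hadj hj
  have hcard : (inv j').ncard < (inv i).ncard := by
    apply Set.ncard_lt_ncard _ (Set.toFinite _)
    refine ⟨?_, fun hss => ?_⟩
    · rintro ⟨c, d⟩ ⟨hcd, hz⟩
      refine ⟨?_, hz⟩
      simp only at hcd hz
      rcases htot i c d with h | h | h
      · exact absurd hcd (by rw [h]; exact hirr j' d)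
      · exact h
      · by_cases hne : (d, c) = (p, q)
        · obtain ⟨rfl, rfl⟩ := Prod.mk.inj hne
          linarith
        · exact absurd (htr j' _ _ _ hcd (hmono _ _ hne h)) (hirr j' c)
    · have := (hss (show (p, q) ∈ inv i from ⟨hpq, hzpq⟩)).1
      exact hirr j' p (htr j' _ _ _ this hj')
  have := hi j' (Finset.mem_univ _)
  omega
end

section
/- In the marked setup below, let λ be a nonnegative dominant marking. Then the marked relative poset polytope R_λ(P,<,<') is normal: for every integer m ≥ 1, every x ∈ ℤ^P with x ∈ m·R_λ(P,<,<') can be written as x = y_1 + ⋯ + y_m with each y_i an integer point of R_λ(P,<,<') (y_i ∈ ℤ^P and y_i ∈ R_λ(P,<,<')). -/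
open Pointwise

/-- The fundamental marked relative poset polytope `R_{ω_K}(P, lt, lt')`: the convex hull
of the points `1_{max_{lt'} J}` over order ideals `J` of `(P, lt)` with `J ∩ P* = K`. -/
noncomputable def RPPfund {P : Type*} (lt lt' : P → P → Prop) (Pstar K : Set P) :
    Set (P → ℝ) :=
  convexHull ℝ
    {x | ∃ J : Set P, IsLowerIdeal lt J ∧ J ∩ Pstar = K ∧ x = ind (maxElems lt' J)}

/-- The set `𝒥*` of order ideals of the subposet `(P*, lt)`. -/
def idealsOn {P : Type*} (lt : P → P → Prop) (Pstar : Set P) : Set (Set P) :=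
  {K | K ⊆ Pstar ∧ ∀ p q : P, p ∈ Pstar → q ∈ Pstar → lt p q → q ∈ K → p ∈ K}

/-- The marked relative poset polytope for a coefficient function `α : 𝒥* → ℕ`:
the Minkowski sum `Σ_{K ∈ 𝒥*} α_K · R_{ω_K}(P, lt, lt')`. -/
noncomputable def RPPmarked {P : Type*} [Fintype P] (lt lt' : P → P → Prop)
    (Pstar : Set P) (α : Set P → ℕ) : Set (P → ℝ) :=
  ∑ K ∈ (Set.toFinite (idealsOn lt Pstar)).toFinset, dilate (α K) (RPPfund lt lt' Pstar K)


open Classical in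
/-- Coefficient data for a point of a fundamental polytope. -/
theorem fund_weights {P : Type*} [Fintype P] (lt lt' : P → P → Prop) (Pstar K : Set P)
    (x : P → ℝ) (hx : x ∈ RPPfund lt lt' Pstar K) :
    ∃ w : Set P → ℝ, (∀ J, 0 ≤ w J) ∧ (∀ J, w J ≠ 0 → IsLowerIdeal lt J ∧ J ∩ Pstar = K) ∧
      ∑ J, w J = 1 ∧ ∑ J, w J • ind (maxElems lt' J) = x := by
  let T : Set (P → ℝ) := {x | ∃ w : Set P → ℝ, (∀ J, 0 ≤ w J) ∧
    (∀ J, w J ≠ 0 → IsLowerIdeal lt J ∧ J ∩ Pstar = K) ∧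
      ∑ J, w J = 1 ∧ ∑ J, w J • ind (maxElems lt' J) = x}
  have hT : Convex ℝ T := by
    rintro x ⟨w, h1, h2, h3, h4⟩ y ⟨u, k1, k2, k3, k4⟩ a b ha hb hab
    refine ⟨fun J => a * w J + b * u J, fun J => ?_, fun J hJ => ?_, ?_, ?_⟩
    · have := h1 J; have := k1 J; positivity
    · by_cases hw : w J = 0
      · apply k2; intro hu; apply hJ; simp [hw, hu]
      · exact h2 J hw
    · rw [Finset.sum_add_distrib, ← Finset.mul_sum, ← Finset.mul_sum, h3, k3]; linarith
    · simp only [add_smul, mul_smul]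
      rw [Finset.sum_add_distrib, ← Finset.smul_sum, ← Finset.smul_sum, h4, k4]
  have : RPPfund lt lt' Pstar K ⊆ T := by
    apply convexHull_min _ hT
    rintro y ⟨J, hJ, hK, rfl⟩
    refine ⟨Pi.single J 1, fun I => ?_, fun I hI => ?_, ?_, ?_⟩
    · by_cases h : I = J
      · subst h; simp
      · simp [Pi.single_eq_of_ne h]
    · by_cases h : I = J
      · subst h; exact ⟨hJ, hK⟩
      · simp [Pi.single_eq_of_ne h] at hI
    · simp
    · rw [Finset.sum_eq_single J] <;> simp +contextual [Pi.single_eq_of_ne]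
  exact this hx

theorem sub_sum {ι : Type*} (s : Finset ι) (n : ι → ℕ) (a : ℕ) (h : a ≤ ∑ j ∈ s, n j) :
    ∃ b : ι → ℕ, (∀ j ∈ s, b j ≤ n j) ∧ ∑ j ∈ s, b j = a := by
  classical
  induction a with
  | zero => exact ⟨0, by simp, by simp⟩
  | succ a ih =>
    obtain ⟨b, hb, hs⟩ := ih (by omega)
    obtain ⟨j, hj, hlt⟩ : ∃ j ∈ s, b j < n j := by
      apply Finset.exists_lt_of_sum_lt; omega
    refine ⟨fun i => b i + if i = j then 1 else 0, fun i hi => ?_, ?_⟩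
    · by_cases h : i = j
      · subst h; simp; omega
      · simp [h, hb i hi]
    · rw [Finset.sum_add_distrib, hs]; simp [hj]

theorem split_sum {ι : Type*} (s : Finset ι) (a m : ℕ) : ∀ (n : ι → ℕ),
    (∑ j ∈ s, n j = m * a) →
    ∃ ν : Fin m → ι → ℕ, (∀ i, ∑ j ∈ s, ν i j = a) ∧ ∀ j ∈ s, ∑ i, ν i j = n j := by
  induction m with
  | zero => 
    intro n hn
    refine ⟨fun i => i.elim0, fun i => i.elim0, fun j hj => ?_⟩
    simp at hn ⊢
    exact (hn j hj).symm
  | succ m ih =>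
    intro n hn
    obtain ⟨b, hb, hs⟩ := sub_sum s n a (by rw [hn]; nlinarith)
    obtain ⟨ν, h1, h2⟩ := ih (fun j => n j - b j) (by
      have : ∑ j ∈ s, (n j - b j) + ∑ j ∈ s, b j = ∑ j ∈ s, n j := by
        rw [← Finset.sum_add_distrib]
        exact Finset.sum_congr rfl fun j hj => Nat.sub_add_cancel (hb j hj)
      rw [hs, hn] at this
      nlinarith)
    refine ⟨Fin.cons b ν, fun i => ?_, fun j hj => ?_⟩
    · refine Fin.cases ?_ (fun i => ?_) i
      · simpa using hs
      · simpa using h1 i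
    · rw [Fin.sum_univ_succ]
      simp only [Fin.cons_zero, Fin.cons_succ]
      rw [h2 j hj]
      have := hb j hj
      omega

theorem max_star {P : Type*} (r : P → P → Prop) (htr : ∀ a b c, r a b → r b c → r a c)
    (J1 J2 : Set P) :
    maxElems r (starOp r J1 J2) = (J1 ∩ J2) ∩ (maxElems r J1 ∪ maxElems r J2) := by
  ext p
  constructor
  · rintro ⟨⟨q, hq, hpq⟩, h⟩
    rcases hpq with rfl | hpq
    · exact hq
    · exact absurd hpq (h q ⟨q, hq, Or.inl rfl⟩)
  · intro hp
    refine ⟨⟨p, hp, Or.inl rfl⟩, ?_⟩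
    rintro q ⟨s, hs, hqs⟩ hpq
    have hps : r p s := by
      rcases hqs with rfl | hqs
      · exact hpq
      · exact htr _ _ _ hpq hqs
    rcases hp.2 with h | h
    · exact h.2 s hs.1.1 hps
    · exact h.2 s hs.1.2 hps

theorem ind_rel {P : Type*} (r : P → P → Prop) (htr : ∀ a b c, r a b → r b c → r a c)
    (J1 J2 : Set P)
    (h1 : IsLowerIdeal r J1) (h2 : IsLowerIdeal r J2) (p : P) :
    ind (maxElems r J1) p + ind (maxElems r J2) p =
      ind (maxElems r (J1 ∪ J2)) p + ind (maxElems r (starOp r J1 J2)) p := by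
  classical
  rw [max_star r htr]
  have hu : p ∈ maxElems r (J1 ∪ J2) ↔ (p ∈ J1 ∨ p ∈ J2) ∧ (p ∈ J1 → p ∈ maxElems r J1) ∧
      (p ∈ J2 → p ∈ maxElems r J2) := by
    constructor
    · rintro ⟨ha, hb⟩
      exact ⟨ha, fun h => ⟨h, fun q hq => hb q (Or.inl hq)⟩,
        fun h => ⟨h, fun q hq => hb q (Or.inr hq)⟩⟩
    · rintro ⟨ha, hb, hc⟩
      refine ⟨ha, ?_⟩
      rintro q (hq | hq) hpq
      · exact (hb (h1 hpq hq)).2 q hq hpq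
      · exact (hc (h2 hpq hq)).2 q hq hpq
  have m1 : p ∈ maxElems r J1 → p ∈ J1 := fun h => h.1
  have m2 : p ∈ maxElems r J2 → p ∈ J2 := fun h => h.1
  simp only [ind, Set.indicator_apply, hu, Set.mem_inter_iff, Set.mem_union, Pi.one_apply]
  by_cases a1 : p ∈ J1 <;> by_cases a2 : p ∈ J2 <;> by_cases b1 : p ∈ maxElems r J1 <;>
    by_cases b2 : p ∈ maxElems r J2 <;> simp_all

/-- Abstract straightening by maximising a linear functional on a compact polytope. -/
theorem straighten {X : Type*} [Fintype X] (F : Set (X → ℝ)) (φ : X → ℝ)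
    (hone : (fun _ => (1 : ℝ)) ∈ F) (S : X → X → Prop)
    (h : ∀ a b, ¬ S a b → a ≠ b ∧ ∃ u v, (∀ f ∈ F, f a + f b = f u + f v) ∧
      φ a + φ b < φ u + φ v)
    (c0 : X → ℝ) (hc0 : ∀ a, 0 ≤ c0 a) :
    ∃ c : X → ℝ, (∀ a, 0 ≤ c a) ∧ (∀ f ∈ F, ∑ a, c a * f a = ∑ a, c0 a * f a) ∧
      ∀ a b, c a ≠ 0 → c b ≠ 0 → S a b := by
  classical
  let C : Set (X → ℝ) := {c | (∀ a, 0 ≤ c a) ∧ ∀ f ∈ F, ∑ a, c a * f a = ∑ a, c0 a * f a}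
  have hclosed : IsClosed C := by
    have : C = (⋂ a, {c : X → ℝ | 0 ≤ c a}) ∩
        ⋂ f ∈ F, {c : X → ℝ | ∑ a, c a * f a = ∑ a, c0 a * f a} := by
      ext c; simp [C]
    rw [this]
    refine IsClosed.inter (isClosed_iInter fun a => isClosed_le continuous_const (by fun_prop)) ?_
    exact isClosed_iInter fun f => isClosed_iInter fun _ =>
      isClosed_eq (by fun_prop) continuous_const
  have hsub : C ⊆ Set.Icc (0 : X → ℝ) (fun _ => ∑ a, c0 a) := by
    rintro c ⟨h1, h2⟩
    refine ⟨h1, fun a => ?_⟩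
    have := h2 _ hone
    simp only [mul_one] at this
    simp only [← this]
    exact Finset.single_le_sum (fun i _ => h1 i) (Finset.mem_univ a)
  have hcomp : IsCompact C := isCompact_Icc.of_isClosed_subset hclosed hsub
  obtain ⟨c, hc, hmax⟩ := hcomp.exists_isMaxOn (f := fun c => ∑ a, c a * φ a)
    ⟨c0, hc0, fun _ _ => rfl⟩ (by fun_prop)
  refine ⟨c, hc.1, hc.2, fun a b ha hb => ?_⟩
  by_contra hS
  obtain ⟨hab, u, v, hF, hφ⟩ := h a b hS
  have ha' : 0 < c a := lt_of_le_of_ne (hc.1 a) (Ne.symm ha)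
  have hb' : 0 < c b := lt_of_le_of_ne (hc.1 b) (Ne.symm hb)
  set ε := min (c a) (c b) with hε
  have hεpos : 0 < ε := lt_min ha' hb'
  let s : X → X → ℝ := fun z w => if w = z then 1 else 0
  let c' : X → ℝ := fun z => c z + ε * (s u z + s v z - s a z - s b z)
  have key : ∀ f : X → ℝ, ∑ z, c' z * f z = ∑ z, c z * f z + ε * (f u + f v - f a - f b) := by
    intro f
    have hs : ∀ w, f w = ∑ z, s w z * f z := by intro w; simp [s]
    rw [hs u, hs v, hs a, hs b, ← Finset.sum_add_distrib, ← Finset.sum_sub_distrib,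
      ← Finset.sum_sub_distrib, Finset.mul_sum, ← Finset.sum_add_distrib]
    refine Finset.sum_congr rfl fun z _ => ?_
    simp only [c']; ring
  have hc' : c' ∈ C := by
    refine ⟨fun z => ?_, fun f hf => ?_⟩
    · have su : 0 ≤ s u z := by simp only [s]; split_ifs <;> norm_num
      have sv : 0 ≤ s v z := by simp only [s]; split_ifs <;> norm_num
      have hz := hc.1 z
      have hm : ε * (s a z + s b z) ≤ c z := by
        by_cases h1 : z = a
        · subst h1
          simp [s, hab, hε]
        · by_cases h2 : z = b
          · subst h2
            simp [s, h1, hε]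
          · simp [s, h1, h2, hz]
      have := mul_nonneg hεpos.le (add_nonneg su sv)
      simp only [c']; nlinarith
    · rw [key, hc.2 f hf]
      have := hF f hf
      have : f u + f v - f a - f b = 0 := by linarith
      rw [this]; ring
  have := hmax hc'
  simp only [Set.mem_ofPred_eq, key] at this
  nlinarith [mul_pos hεpos (show 0 < φ u + φ v - φ a - φ b by linarith)]

/-- Unimodularity of chains. -/
theorem chain_integral {P X : Type*} [Fintype P] [Fintype X] (r : P → P → Prop)
    (hirr : ∀ p, ¬ r p p) (htr : ∀ a b c, r a b → r b c → r a c)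
    (J : X → Set P) (hJ : Function.Injective J) (hlow : ∀ a, IsLowerIdeal r (J a))
    (hne : ∀ a, (J a).Nonempty) (c : X → ℝ)
    (hch : ∀ a b, c a ≠ 0 → c b ≠ 0 → J a ⊆ J b ∨ J b ⊆ J a)
    (x : P → ℤ) (hx : ∀ p, ∑ a, c a * ind (maxElems r (J a)) p = x p) :
    ∀ a, ∃ n : ℤ, c a = n := by
  classical
  by_contra! hcon
  let B : Finset X := Finset.univ.filter fun a => ∀ n : ℤ, c a ≠ n
  obtain ⟨a, haB, hamax⟩ := B.exists_max_image (fun a => (J a).ncard)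
    (by obtain ⟨a, ha⟩ := hcon; exact ⟨a, by simpa [B] using ha⟩)
  have ha : ∀ n : ℤ, c a ≠ n := by simpa [B] using haB
  have ha0 : c a ≠ 0 := by simpa using ha 0
  -- largest support member strictly below
  let D : Finset (Set P) := insert ∅ ((Finset.univ.filter fun b => c b ≠ 0 ∧ J b ⊂ J a).image J)
  obtain ⟨U, hUD, hUmax⟩ := D.exists_max_image (fun s => s.ncard) ⟨∅, by simp [D]⟩
  have hUsub : U ⊂ J a := by
    simp only [D, Finset.mem_insert, Finset.mem_image, Finset.mem_filter, Finset.mem_univ,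
      true_and] at hUD
    rcases hUD with rfl | ⟨b, hb, rfl⟩
    · exact Set.empty_ssubset.2 (hne a)
    · exact hb.2
  have hUlow : IsLowerIdeal r U := by
    simp only [D, Finset.mem_insert, Finset.mem_image, Finset.mem_filter, Finset.mem_univ,
      true_and] at hUD
    rcases hUD with rfl | ⟨b, hb, rfl⟩
    · intro p q _ h; exact h
    · exact hlow b
  have hbU : ∀ b, c b ≠ 0 → J b ⊂ J a → J b ⊆ U := by
    intro b hb hba
    have hbD : J b ∈ D := by
      simp only [D, Finset.mem_insert, Finset.mem_image, Finset.mem_filter, Finset.mem_univ,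
        true_and]
      exact Or.inr ⟨b, ⟨hb, hba⟩, rfl⟩
    have hcard := hUmax _ hbD
    simp only [D, Finset.mem_insert, Finset.mem_image, Finset.mem_filter, Finset.mem_univ,
      true_and] at hUD
    rcases hUD with rfl | ⟨d, hd, rfl⟩
    · have : (J b).ncard = 0 := by simpa using hcard
      rw [Set.ncard_eq_zero (Set.toFinite _)] at this
      rw [this]
    · rcases hch b d hb hd.1 with h | h
      · exact h
      · exact (Set.eq_of_subset_of_ncard_le h hcard (Set.toFinite _)).symm.subset
  -- a maximal element of J a outside U
  obtain ⟨p, hp, hpm⟩ : ∃ p ∈ J a \ U, ∀ q ∈ J a \ U, ¬ r p q := by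
    have : IsTrans P r := ⟨htr⟩
    have : Std.Irrefl r := ⟨hirr⟩
    have wf : WellFounded (Function.swap r) := Finite.wellFounded_of_trans_of_irrefl _
    obtain ⟨p, hp, h⟩ := wf.has_min (J a \ U) (Set.nonempty_of_ssubset hUsub)
    exact ⟨p, hp, fun q hq => h q hq⟩
  have hpmax : p ∈ maxElems r (J a) := by
    refine ⟨hp.1, fun q hq hpq => ?_⟩
    by_cases hqU : q ∈ U
    · exact hp.2 (hUlow hpq hqU)
    · exact hpm q ⟨hq, hqU⟩ hpq
  have hterm : ∀ b, b ≠ a → ∃ n : ℤ, c b * ind (maxElems r (J b)) p = n := by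
    intro b hba
    by_cases hb : c b = 0
    · exact ⟨0, by simp [hb]⟩
    have hJne : J b ≠ J a := fun h => hba (hJ h)
    rcases hch b a hb ha0 with h | h
    · have hss : J b ⊂ J a := lt_of_le_of_ne h hJne
      refine ⟨0, ?_⟩
      have : p ∉ maxElems r (J b) := fun h' => hp.2 (hbU b hb hss h'.1)
      simp [ind, this]
    · have hss : J a ⊂ J b := lt_of_le_of_ne h hJne.symm
      have : b ∉ B := fun hB => by
        have := hamax b hB
        have := Set.ncard_lt_ncard hss (Set.toFinite _)
        omega
      simp only [B, Finset.mem_filter, Finset.mem_univ, true_and, not_forall, not_not] at this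
      obtain ⟨n, hn⟩ := this
      by_cases hpb : p ∈ maxElems r (J b)
      · exact ⟨n, by simp [ind, hpb, hn]⟩
      · exact ⟨0, by simp [ind, hpb]⟩
  choose! n hn using hterm
  have := hx p
  rw [← Finset.add_sum_erase _ _ (Finset.mem_univ a),
    Finset.sum_congr rfl (fun b hb => hn b (Finset.ne_of_mem_erase hb))] at this
  apply ha (x p - ∑ b ∈ Finset.univ.erase a, n b)
  simp only [ind, Set.indicator_of_mem hpmax, Pi.one_apply, mul_one] at this
  push_cast
  linarith

/-- For a nonnegative dominant marking `λ` with decomposition coefficients `α`, the marked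
relative poset polytope `R_λ(P, lt, lt')` is normal: every integer point of
`m·R_λ(P, lt, lt')` is a sum of `m` integer points of `R_λ(P, lt, lt')`. -/
theorem stmt15 {P : Type*} [Fintype P] (lt lt' : P → P → Prop)
    (hltirr : ∀ p, ¬ lt p p) (hlttr : ∀ a b c, lt a b → lt b c → lt a c)
    (hlt'irr : ∀ p, ¬ lt' p p) (hlt'tr : ∀ a b c, lt' a b → lt' b c → lt' a c)
    (hweak : ∀ p q, lt' p q → lt p q)
    (hstar : ∀ J1 J2 : Set P, IsLowerIdeal lt J1 → IsLowerIdeal lt J2 →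
      IsLowerIdeal lt (starOp lt' J1 J2))
    (Pstar : Set P)
    (hmin : ∀ p : P, (∀ q, ¬ lt q p) → p ∈ Pstar)
    (hmax : ∀ p : P, (∀ q, ¬ lt p q) → p ∈ Pstar)
    (hiii : ∀ p ∈ Pstar, ∀ q : P, ¬ lt' p q)
    (lam : P → ℤ) (α : Set P → ℕ)
    (hlamnn : ∀ p ∈ Pstar, 0 ≤ lam p)
    (hdom : ∀ p q : P, p ∈ Pstar → q ∈ Pstar → lt p q → lam q ≤ lam p)
    (hαsupp : ∀ K : Set P, α K ≠ 0 → K ∈ idealsOn lt Pstar ∧ K.Nonempty)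
    (hαchain : ∀ K1 K2 : Set P, α K1 ≠ 0 → α K2 ≠ 0 → K1 ⊆ K2 ∨ K2 ⊆ K1)
    (hαsum : ∀ p ∈ Pstar, lam p =
      ∑ K ∈ (Set.toFinite (idealsOn lt Pstar)).toFinset, (α K : ℤ) * K.indicator 1 p)
    (m : ℕ) (hm : 1 ≤ m) (x : P → ℤ)
    (hx : (fun p => (x p : ℝ)) ∈ dilate m (RPPmarked lt lt' Pstar α)) :
    ∃ y : Fin m → P → ℤ,
      (∀ i, (fun p => (y i p : ℝ)) ∈ RPPmarked lt lt' Pstar α) ∧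
      (fun p => (x p : ℝ)) = ∑ i, (fun p => (y i p : ℝ)) := by
  classical
  let X := {J : Set P // IsLowerIdeal lt J ∧ α (J ∩ Pstar) ≠ 0}
  have hlow' : ∀ J, IsLowerIdeal lt J → IsLowerIdeal lt' J :=
    fun J hJ p q h hq => hJ (hweak p q h) hq
  set T := (Set.toFinite (idealsOn lt Pstar)).toFinset with hT
  have hαT : ∀ K, α K ≠ 0 → K ∈ T := fun K hK => by simpa [hT] using (hαsupp K hK).1
  -- initial coefficients
  obtain ⟨z, hz, hzx⟩ := hx
  obtain ⟨g, hg, hgz⟩ := (Set.mem_finsetSum _ _ _).1 hz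
  have hgK : ∀ K ∈ T, ∃ h, h ∈ RPPfund lt lt' Pstar K ∧ (α K : ℝ) • h = g K :=
    fun K hK => hg hK
  choose! hh hh1 hh2 using hgK
  choose! w w0 w1 w2 w3 using fun K hK => fund_weights lt lt' Pstar K (hh K) (hh1 K hK)
  let C : Set P → ℝ := fun J => ∑ K ∈ T, (m * α K : ℝ) * w K J
  have hC0 : ∀ J, 0 ≤ C J := fun J =>
    Finset.sum_nonneg fun K hK => mul_nonneg (by positivity) (w0 K hK J)
  have hCX : ∀ J, C J ≠ 0 → IsLowerIdeal lt J ∧ α (J ∩ Pstar) ≠ 0 := by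
    intro J hJ
    obtain ⟨K, hK, hne⟩ := Finset.exists_ne_zero_of_sum_ne_zero hJ
    have h1 : w K J ≠ 0 := right_ne_zero_of_mul hne
    obtain ⟨h2, h3⟩ := w1 K hK J h1
    refine ⟨h2, ?_⟩
    rw [h3]; intro h0; simp [h0] at hne
  have hsumX : ∀ f : Set P → ℝ, ∑ J : X, C J.1 * f J.1 = ∑ K ∈ T, (m * α K : ℝ) * ∑ J, w K J * f J := by
    intro f
    have e1 : ∑ J : X, C J.1 * f J.1 = ∑ J, C J * f J := by
      have e2 := Finset.sum_subtype (F := inferInstanceAs (Fintype X)) (Finset.univ.filter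
        fun J : Set P => IsLowerIdeal lt J ∧ α (J ∩ Pstar) ≠ 0)
        (p := fun J : Set P => IsLowerIdeal lt J ∧ α (J ∩ Pstar) ≠ 0)
        (by simp) (fun J => C J * f J)
      refine e2.symm.trans (Finset.sum_filter_of_ne fun J _ hJ => ?_)
      exact hCX J (left_ne_zero_of_mul hJ)
    rw [e1]
    simp only [C, Finset.sum_mul, Finset.mul_sum]
    rw [Finset.sum_comm]
    exact Finset.sum_congr rfl fun K _ => Finset.sum_congr rfl fun J _ => by ring
  -- straightening
  let f1 : Set P → X → ℝ := fun K J => if J.1 ∩ Pstar = K then 1 else 0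
  let f2 : P → X → ℝ := fun p J => ind (maxElems lt' J.1) p
  obtain ⟨c, hc0, hcF, hcS⟩ := straighten (X := X)
    (insert (fun _ => 1) (Set.range f1 ∪ Set.range f2)) (fun J => (3 : ℝ) ^ (J.1.ncard))
    (Set.mem_insert _ _) (fun J1 J2 => J1.1 ⊆ J2.1 ∨ J2.1 ⊆ J1.1)
    (by
      rintro ⟨J1, h1, k1⟩ ⟨J2, h2, k2⟩ hS
      simp only [not_or] at hS
      have hU : IsLowerIdeal lt (J1 ∪ J2) := fun p q h hq => hq.imp (h1 h) (h2 h)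
      have hSt := hstar J1 J2 h1 h2
      have hstsub : starOp lt' J1 J2 ⊆ J1 ∩ J2 := by
        rintro p ⟨q, hq, rfl | hpq⟩
        · exact hq.1
        · exact ⟨hlow' _ h1 hpq hq.1.1, hlow' _ h2 hpq hq.1.2⟩
      have eU : (J1 ∪ J2) ∩ Pstar = (J1 ∩ Pstar) ∪ (J2 ∩ Pstar) := Set.union_inter_distrib_right _ _ _
      have eS : starOp lt' J1 J2 ∩ Pstar = (J1 ∩ Pstar) ∩ (J2 ∩ Pstar) := by
        ext p
        constructor
        · rintro ⟨hp, hps⟩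
          exact ⟨⟨(hstsub hp).1, hps⟩, (hstsub hp).2, hps⟩
        · rintro ⟨⟨hp1, hps⟩, hp2, _⟩
          exact ⟨⟨p, ⟨⟨hp1, hp2⟩, Or.inl ⟨hp1, fun q _ => hiii p hps q⟩⟩, Or.inl rfl⟩, hps⟩
      have hcases : ((J1 ∪ J2) ∩ Pstar = J1 ∩ Pstar ∧ starOp lt' J1 J2 ∩ Pstar = J2 ∩ Pstar) ∨
          ((J1 ∪ J2) ∩ Pstar = J2 ∩ Pstar ∧ starOp lt' J1 J2 ∩ Pstar = J1 ∩ Pstar) := by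
        rw [eU, eS]
        rcases hαchain _ _ k1 k2 with h | h
        · exact Or.inr ⟨Set.union_eq_right.2 h, Set.inter_eq_left.2 h⟩
        · exact Or.inl ⟨Set.union_eq_left.2 h, Set.inter_eq_right.2 h⟩
      have kU : α ((J1 ∪ J2) ∩ Pstar) ≠ 0 := by
        rcases hcases with h | h <;> rw [h.1] <;> assumption
      have kS : α (starOp lt' J1 J2 ∩ Pstar) ≠ 0 := by
        rcases hcases with h | h <;> rw [h.2] <;> assumption
      refine ⟨?_, ⟨_, hU, kU⟩, ⟨_, hSt, kS⟩, ?_, ?_⟩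
      · intro h
        have : J1 = J2 := congrArg Subtype.val h
        exact hS.1 this.subset
      · rintro f (rfl | ⟨K, rfl⟩ | ⟨p, rfl⟩)
        · rfl
        · simp only [f1]
          rcases hcases with h | h <;> rw [h.1, h.2]
          ring
        · exact ind_rel lt' hlt'tr J1 J2 (hlow' _ h1) (hlow' _ h2) p
      · have n1 : J1.ncard < (J1 ∪ J2).ncard := Set.ncard_lt_ncard
          (Set.ssubset_iff_subset_ne.2 ⟨Set.subset_union_left, fun h => hS.2 (by
            rw [h]; exact Set.subset_union_right)⟩) (Set.toFinite _)
        have n2 : J2.ncard < (J1 ∪ J2).ncard := Set.ncard_lt_ncard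
          (Set.ssubset_iff_subset_ne.2 ⟨Set.subset_union_right, fun h => hS.1 (by
            rw [h]; exact Set.subset_union_left)⟩) (Set.toFinite _)
        have p1 : (3 : ℝ) ^ (J1.ncard + 1) ≤ 3 ^ (J1 ∪ J2).ncard :=
          pow_le_pow_right₀ (by norm_num) n1
        have p2 : (3 : ℝ) ^ (J2.ncard + 1) ≤ 3 ^ (J1 ∪ J2).ncard :=
          pow_le_pow_right₀ (by norm_num) n2
        have p3 : (0 : ℝ) < 3 ^ (starOp lt' J1 J2).ncard := by positivity
        have p4 : (0 : ℝ) < 3 ^ (J1 ∪ J2).ncard := by positivity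
        rw [pow_succ] at p1 p2
        simp only
        linarith)
    (fun J => C J.1) (fun J => hC0 _)
  have hcx : ∀ p, ∑ J : X, c J * ind (maxElems lt' J.1) p = x p := by
    intro p
    have e := hcF (f2 p) (by right; right; exact ⟨p, rfl⟩)
    simp only [f2] at e
    rw [e, hsumX (fun J => ind (maxElems lt' J) p)]
    have e2 := congrFun hzx p
    simp only at e2
    rw [← e2, ← hgz, Pi.smul_apply, Finset.sum_apply, smul_eq_mul, Finset.mul_sum]
    refine Finset.sum_congr rfl fun K hK => ?_
    rw [← hh2 K hK, ← w3 K hK]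
    simp [mul_assoc]
  have hcK : ∀ K ∈ T, ∑ J ∈ Finset.univ.filter (fun J : X => J.1 ∩ Pstar = K), c J = m * α K := by
    intro K hK
    have e := hcF (f1 K) (by right; left; exact ⟨K, rfl⟩)
    simp only [f1] at e
    rw [hsumX (fun J => if J ∩ Pstar = K then 1 else 0)] at e
    rw [Finset.sum_filter]
    simp only [mul_ite, mul_one, mul_zero] at e
    rw [e, Finset.sum_eq_single K]
    · have : ∑ J, (if J ∩ Pstar = K then w K J else 0) = ∑ J, w K J := by
        refine Finset.sum_congr rfl fun J _ => ?_
        split_ifs with h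
        · rfl
        · by_contra h'
          exact h (w1 K hK J (Ne.symm h')).2
      rw [this, w2 K hK, mul_one]
    · intro K' hK' hne
      rw [Finset.sum_eq_zero, mul_zero]
      intro J _
      split_ifs with h
      · by_contra h'
        exact hne ((w1 K' hK' J h').2.symm.trans h)
      · rfl
    · intro h; exact absurd hK h
  have hint := chain_integral lt' hlt'irr hlt'tr (fun J : X => J.1) Subtype.val_injective
    (fun J => hlow' _ J.2.1) (fun J => (hαsupp _ J.2.2).2.mono Set.inter_subset_left) c hcS x hcx
  have hnat : ∀ J : X, ∃ n : ℕ, c J = n := by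
    intro J
    obtain ⟨n, hn⟩ := hint J
    have : 0 ≤ n := by have := hc0 J; rw [hn] at this; exact_mod_cast this
    lift n to ℕ using this
    exact ⟨n, by simpa using hn⟩
  choose n hn using hnat
  choose! N hN1 hN2 using fun (K : Set P) (hK : K ∈ T) =>
    split_sum (Finset.univ.filter (fun J : X => J.1 ∩ Pstar = K)) (α K) m n (by
      have := hcK K hK
      simp only [hn] at this
      exact_mod_cast this)
  have hXT : ∀ J : X, J.1 ∩ Pstar ∈ T := fun J => hαT _ J.2.2
  let ν : Fin m → X → ℕ := fun i J => N (J.1 ∩ Pstar) i J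
  let y : Fin m → P → ℤ := fun i p => ∑ J : X, (ν i J : ℤ) * (maxElems lt' J.1).indicator 1 p
  have hy : ∀ i p, (y i p : ℝ) = ∑ J : X, (ν i J : ℝ) * ind (maxElems lt' J.1) p := by
    intro i p
    simp only [y, ind, Set.indicator_apply]
    push_cast
    simp
  refine ⟨y, fun i => ?_, ?_⟩
  · have hyi : (fun p => (y i p : ℝ)) = ∑ K ∈ T,
        ∑ J ∈ Finset.univ.filter (fun J : X => J.1 ∩ Pstar = K),
          (ν i J : ℝ) • ind (maxElems lt' J.1) := by
      rw [Finset.sum_fiberwise_of_maps_to (fun J _ => hXT J)]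
      ext p
      rw [hy]; simp
    rw [hyi]
    apply Set.finsetSum_mem_finsetSum
    intro K hK
    have hνK : ∑ J ∈ Finset.univ.filter (fun J : X => J.1 ∩ Pstar = K), ν i J = α K := by
      rw [← hN1 K hK i]
      refine Finset.sum_congr rfl fun J hJ => ?_
      simp only [Finset.mem_filter, Finset.mem_univ, true_and] at hJ
      simp only [ν, hJ]
    by_cases h0 : α K = 0
    · refine ⟨hh K, hh1 K hK, ?_⟩
      rw [h0, Finset.sum_eq_zero_iff] at hνK
      rw [Finset.sum_eq_zero]
      · simp [h0]
      · intro J hJ; simp [hνK J hJ]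
    · have hpos : (0 : ℝ) < α K := by exact_mod_cast Nat.pos_of_ne_zero h0
      refine ⟨∑ J ∈ Finset.univ.filter (fun J : X => J.1 ∩ Pstar = K),
          ((ν i J : ℝ) / α K) • ind (maxElems lt' J.1), ?_, ?_⟩
      · apply (convex_convexHull ℝ _).sum_mem
        · intro J _; positivity
        · rw [← Finset.sum_div, ← Nat.cast_sum, hνK, div_self hpos.ne']
        · intro J hJ
          simp only [Finset.mem_filter, Finset.mem_univ, true_and] at hJ
          exact subset_convexHull _ _ ⟨J.1, J.2.1, hJ, rfl⟩
      · simp only [Finset.smul_sum, smul_smul]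
        refine Finset.sum_congr rfl fun J _ => ?_
        rw [mul_div_cancel₀ _ hpos.ne']
  · ext p
    rw [Finset.sum_apply, ← hcx p]
    simp only [hy]
    rw [Finset.sum_comm]
    refine Finset.sum_congr rfl fun J _ => ?_
    rw [← Finset.sum_mul, hn, ← Nat.cast_sum]
    congr 2
    exact (hN2 _ (hXT J) J (by simp)).symm
end
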